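/- Let m ∈ ℕ and k ∈ ℕ with k ≥ 1 and m ≤ k. Then there exists N' ∈ ℕ such that for all N ≥ N' the following holds: for every map e : Q(kN) → Q(kN) there exists s ∈ Q_k^m(kN) such that for all t ∈ Q(kN) with t ≤ s, either e(t) ≤ t or e(t) ≰ s. -/

import Mathlib

/-- The coarsening order on partitions (equivalence relations) of `{0,…,n−1}`:
`QLe s t` (written `s ≤ t` in the paper) iff every `s`-class is a union of `t`-classes. -/
def QLe {n : ℕ} (s t : Setoid (Fin n)) : Prop := ∀ i j : Fin n, t i j → s i j

/-- `Q^m(n)`: the partitions of `{0,…,n−1}` in which `0, 1, …, m−1` belong to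
pairwise distinct classes. -/
def Qm {n : ℕ} (m : ℕ) (s : Setoid (Fin n)) : Prop :=
  ∀ i j : Fin n, (i : ℕ) < (j : ℕ) → (j : ℕ) < m → ¬ s i j

/-- `Q_k(kN)`: partitions of `{0,…,kN−1}` into exactly `k` classes, each of size `N`. -/
def Qk (k N : ℕ) (s : Setoid (Fin (k * N))) : Prop :=
  Nat.card (Quotient s) = k ∧ ∀ i : Fin (k * N), {j : Fin (k * N) | s i j}.ncard = N

/-! Fix representatives `rep c`, one per label `c : κ`, and consider the labelings `f : α → κ` of
the points of `α` that give `rep c` the label `c` and have fibers of prescribed sizes. The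
partition sought is the partition `ker f` into fibers of such an `f`, and its coarsenings are the
`comap f p` with `p` a partition of `κ`.

Call `f` bad for `p` if `t = comap f p` violates the conclusion. Then `ker f` refines `e t`, but
`e t` keeps apart two fibers of `f` whose labels are identified by `p`. Swapping the labels of a
point of one and a point of the other yields a labeling `f'` with `comap f' p = t`. The swapped
pair can be recovered from `f'`: it consists of the points `z` that `e t` does not relate to
`rep (f' z)`. Hence distinct bad labelings have disjoint sets of such perturbations `f'`. As each
of these sets has at least as many elements as a fiber has points that are not representatives,
for large fibers the labelings bad for `p` are a proportion of less than
`1 / Nat.card (Setoid κ)` of all labelings.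
Therefore some labeling is bad for no `p`.

Mathlib orders `Setoid` by inclusion of relations, so `s ≤ t` says that `t` is coarser than `s`:
this is `QLe t s`. -/

open Function Set

section Counting

variable {β γ : Type*}

lemma ncard_mul_le_ncard_of_leftUnique [Finite β] [Finite γ] {s : Set β} {t : Set γ}
    {r : β → γ → Prop} {d : ℕ} (hdeg : ∀ b ∈ s, d ≤ {c | c ∈ t ∧ r b c}.ncard)
    (hr : ∀ b ∈ s, ∀ b' ∈ s, ∀ c, r b c → r b' c → b = b') : s.ncard * d ≤ t.ncard := by
  classical
  have := Fintype.ofFinite β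
  have := Fintype.ofFinite γ
  simpa [ncard_eq_toFinset_card'] using
    Finset.card_mul_le_card_mul (s := s.toFinset) (t := t.toFinset) (m := d) (n := 1) r
      (fun b hb ↦ by
        simpa [← ncard_coe_finset, Finset.bipartiteAbove] using hdeg b (mem_toFinset.1 hb))
      (fun c _ ↦ Finset.card_le_one.2 fun b hb b' hb' ↦ by
        simp only [Finset.mem_bipartiteBelow, mem_toFinset] at hb hb'
        exact hr b hb.1 b' hb'.1 c hb.2 hb'.2)

lemma exists_mem_forall_notMem_of_ncard_mul_le [Finite β] {ι : Type*} [Finite ι] {t : Set β}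
    {s : ι → Set β} {d : ℕ} (ht : t.Nonempty) (hι : Nat.card ι < d)
    (hs : ∀ i, (s i).ncard * d ≤ t.ncard) : ∃ b ∈ t, ∀ i, b ∉ s i := by
  have := Fintype.ofFinite ι
  have hunion : (⋃ i, s i).ncard * d < t.ncard * d :=
    calc (⋃ i, s i).ncard * d ≤ (∑ i, (s i).ncard) * d :=
          Nat.mul_le_mul_right d (ncard_iUnion_le_of_fintype s)
      _ = ∑ i, (s i).ncard * d := Finset.sum_mul ..
      _ ≤ ∑ _ : ι, t.ncard := Finset.sum_le_sum fun i _ ↦ hs i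
      _ = t.ncard * Nat.card ι := by simp [mul_comm]
      _ < t.ncard * d := Nat.mul_lt_mul_of_pos_left hι ht.ncard_pos
  simpa using exists_mem_notMem_of_ncard_lt_ncard (lt_of_mul_lt_mul_right' hunion)

end Counting

section Labeling

variable {α κ : Type*}

lemma finite_setoid [Finite α] : Finite (Setoid α) :=
  Finite.of_injective (fun s : Setoid α ↦ (⇑s : α → α → Prop)) fun _ _ ↦ Setoid.eq_iff_rel_eq.2

lemma comap_comp_swap [DecidableEq α] {f : α → κ} {p : Setoid κ} {x y : α} (h : p (f x) (f y)) :
    Setoid.comap (f ∘ Equiv.swap x y) p = Setoid.comap f p := by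
  have hswap (z : α) : p (f (Equiv.swap x y z)) (f z) := by
    rw [Equiv.swap_apply_def]
    split_ifs with hx hy
    · exact hx ▸ p.symm' h
    · exact hy ▸ h
    · exact p.refl' _
  ext a b
  exact ⟨fun hab ↦ p.trans' (p.symm' (hswap a)) (p.trans' hab (hswap b)),
    fun hab ↦ p.trans' (hswap a) (p.trans' hab (p.symm' (hswap b)))⟩

lemma setOf_not_rel_rep_comp_swap [DecidableEq α] {f : α → κ} {rep : κ → α} {r : Setoid α}
    {x y : α} (hf : LeftInverse f rep) (hr : Setoid.ker f ≤ r) (hxy : ¬ r x y) :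
    {z | ¬ r z (rep ((f ∘ Equiv.swap x y) z))} = {x, y} := by
  have hrep (a : α) : r a (rep (f a)) := hr (hf (f a)).symm
  have hswap (z : α) : r z (rep ((f ∘ Equiv.swap x y) z)) ↔ r z (Equiv.swap x y z) :=
    ⟨fun h ↦ r.trans' h (r.symm' (hrep _)), fun h ↦ r.trans' h (hrep _)⟩
  ext z
  rw [mem_ofPred_eq, hswap, Equiv.swap_apply_def]
  split_ifs with hx hy
  · simp [hx, hxy]
  · simp [hy, r.comm' (x := y), hxy]
  · simp [hx, hy]

/-- The labelings `f` of the points of `α` by `κ` that give each representative `rep c` its own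
label `c` and have `w c` points with label `c`. Their kernels are the partitions of `α` with
class sizes `w` in which the representatives lie in distinct classes. -/
structure IsLabeling (rep : κ → α) (w : κ → ℕ) (f : α → κ) : Prop where
  leftInverse : LeftInverse f rep
  ncard_fiber (c : κ) : (f ⁻¹' {c}).ncard = w c

/-- The partition `comap f p`, a coarsening of `ker f`, is a counterexample to the conclusion of the
theorem for `ker f`. -/
def IsBad (e : Setoid α → Setoid α) (p : Setoid κ) (f : α → κ) : Prop :=
  Setoid.ker f ≤ e (Setoid.comap f p) ∧ ¬ Setoid.comap f p ≤ e (Setoid.comap f p)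

open Classical in
/-- `f'` arises from `f` by swapping the labels of two points that are not representatives, whose
labels are identified by `p` and which are not related by `r`. In the application `r` is
`e (comap f p)` for a labeling `f` that is bad for `p`. -/
def IsPerturbation (rep : κ → α) (p : Setoid κ) (r : Setoid α) (f f' : α → κ) : Prop :=
  ∃ x ∉ range rep, ∃ y ∉ range rep, p (f x) (f y) ∧ ¬ r x y ∧ f' = f ∘ Equiv.swap x y

variable {rep : κ → α} {w : κ → ℕ} {f : α → κ} {p : Setoid κ} {r : Setoid α}

namespace IsLabeling

lemma comp_swap [DecidableEq α] (hf : IsLabeling rep w f) {x y : α} (hx : x ∉ range rep)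
    (hy : y ∉ range rep) : IsLabeling rep w (f ∘ Equiv.swap x y) where
  leftInverse c := by
    rw [comp_apply, Equiv.swap_apply_of_ne_of_ne (fun h ↦ hx ⟨c, h⟩) (fun h ↦ hy ⟨c, h⟩),
      hf.leftInverse]
  ncard_fiber c := by
    rw [preimage_comp, ncard_preimage_of_injective_subset_range (Equiv.injective _) (by simp),
      hf.ncard_fiber]

lemma ncard_fiber_diff_range_add_one [Finite α] (hf : IsLabeling rep w f) (c : κ) :
    (f ⁻¹' {c} \ range rep).ncard + 1 = w c := by
  have hdiff : f ⁻¹' {c} \ range rep = f ⁻¹' {c} \ {rep c} := by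
    ext x
    refine and_congr_right fun hx ↦ not_congr ⟨?_, fun h ↦ ⟨c, h.symm⟩⟩
    rintro ⟨d, rfl⟩
    exact congrArg rep ((hf.leftInverse d).symm.trans hx)
  rw [hdiff, ncard_sdiff_singleton_add_one (s := f ⁻¹' {c}) (hf.leftInverse c), hf.ncard_fiber]

lemma le_ncard_isPerturbation [Finite α] [Finite κ] {d : ℕ} (hf : IsLabeling rep w f)
    (hw : ∀ c, d < w c) (hker : Setoid.ker f ≤ r) (hcomap : ¬ Setoid.comap f p ≤ r) :
    d ≤ {f' | IsLabeling rep w f' ∧ IsPerturbation rep p r f f'}.ncard := by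
  classical
  obtain rfl | hd := d.eq_zero_or_pos
  · exact Nat.zero_le _
  have hfiber (c : κ) : d ≤ (f ⁻¹' {c} \ range rep).ncard := by
    have := hf.ncard_fiber_diff_range_add_one c
    have := hw c
    omega
  obtain ⟨a, b, hab, hrab⟩ : ∃ a b, p (f a) (f b) ∧ ¬ r a b := by
    simpa [Setoid.le_def, Setoid.comap_rel] using hcomap
  have hne : f a ≠ f b := fun h ↦ hrab (hker h)
  obtain ⟨y, hyb : f y = f b, hy⟩ := nonempty_of_ncard_ne_zero (hd.trans_le (hfiber (f b))).ne'
  refine (hfiber (f a)).trans (ncard_le_ncard_of_injOn (fun x ↦ f ∘ Equiv.swap x y) ?_ ?_)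
  · rintro x ⟨hxa : f x = f a, hx⟩
    have hrxy : ¬ r x y := fun h ↦ hrab (r.trans' (hker hxa.symm) (r.trans' h (hker hyb)))
    exact ⟨hf.comp_swap hx hy, x, hx, y, hy, by rwa [hxa, hyb], hrxy, rfl⟩
  · rintro x ⟨hxa : f x = f a, -⟩ x' - hxx'
    -- Among the points labelled `f a` by `f`, only `x` has a new label after the swap.
    by_contra hx
    have hxy : x ≠ y := by
      rintro rfl
      exact hne (hxa.symm.trans hyb)
    have := congrFun hxx' x
    simp only [comp_apply, Equiv.swap_apply_left, Equiv.swap_apply_of_ne_of_ne hx hxy] at this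
    exact hne (hxa.symm.trans (this.symm.trans hyb))

end IsLabeling

namespace IsPerturbation

variable {f₁ f₂ f' : α → κ}

lemma comap_eq (h : IsPerturbation rep p r f f') : Setoid.comap f' p = Setoid.comap f p := by
  classical
  obtain ⟨x, -, y, -, hp, -, rfl⟩ := h
  exact comap_comp_swap hp

lemma left_unique (h₁ : IsPerturbation rep p r f₁ f') (h₂ : IsPerturbation rep p r f₂ f')
    (hf₁ : LeftInverse f₁ rep) (hf₂ : LeftInverse f₂ rep) (hr₁ : Setoid.ker f₁ ≤ r)
    (hr₂ : Setoid.ker f₂ ≤ r) : f₁ = f₂ := by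
  classical
  obtain ⟨x₁, -, y₁, -, -, hxy₁, hf'₁⟩ := h₁
  obtain ⟨x₂, -, y₂, -, -, hxy₂, hf'₂⟩ := h₂
  have hpair : ({x₁, y₁} : Set α) = {x₂, y₂} := by
    rw [← setOf_not_rel_rep_comp_swap hf₁ hr₁ hxy₁, ← setOf_not_rel_rep_comp_swap hf₂ hr₂ hxy₂]
    simp only [← hf'₁, ← hf'₂]
  have hswap : Equiv.swap x₁ y₁ = Equiv.swap x₂ y₂ := by
    obtain ⟨rfl, rfl⟩ | ⟨rfl, rfl⟩ := pair_eq_pair_iff.1 hpair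
    · rfl
    · exact Equiv.swap_comm ..
  refine (Equiv.surjective (Equiv.swap x₁ y₁)).injective_comp_right ?_
  convert hf'₁.symm.trans hf'₂

end IsPerturbation

lemma ncard_isBad_mul_le [Finite α] [Finite κ] {d : ℕ} (hw : ∀ c, d < w c)
    (e : Setoid α → Setoid α) (p : Setoid κ) :
    {f | IsLabeling rep w f ∧ IsBad e p f}.ncard * d ≤ {f | IsLabeling rep w f}.ncard := by
  refine ncard_mul_le_ncard_of_leftUnique
    (r := fun f ↦ IsPerturbation rep p (e (Setoid.comap f p)) f) ?_ ?_
  · rintro f ⟨hf, hker, hcomap⟩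
    exact hf.le_ncard_isPerturbation hw hker hcomap
  · rintro f₁ ⟨hf₁, hker₁, -⟩ f₂ ⟨hf₂, hker₂, -⟩ f' h₁ h₂
    have hcomap : Setoid.comap f₁ p = Setoid.comap f₂ p := h₁.comap_eq.symm.trans h₂.comap_eq
    rw [hcomap] at h₁ hker₁
    exact h₁.left_unique h₂ hf₁.leftInverse hf₂.leftInverse hker₁ hker₂

lemma exists_isLabeling [Fintype α] [Fintype κ] (hrep : Injective rep) (hw : ∀ c, 0 < w c)
    (hsum : ∑ c, w c = Fintype.card α) : ∃ f, IsLabeling rep w f := by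
  obtain ⟨g, hg⟩ : ∃ g : (Σ c, Fin (w c)) ≃ α, ∀ c, g ⟨c, 0, hw c⟩ = rep c := by
    obtain ⟨g, hg⟩ := MapsTo.exists_equiv_extend_of_card_eq (α := Σ c, Fin (w c))
      (t := (Finset.univ : Finset α)) (s := range fun c ↦ ⟨c, 0, hw c⟩) (f := fun a ↦ rep a.1)
      (by simpa using hsum) (fun _ _ ↦ Finset.mem_univ _) (by
        rintro _ ⟨c, rfl⟩ _ ⟨d, rfl⟩ h
        obtain rfl : c = d := hrep h
        rfl)
    exact ⟨g.trans (Equiv.subtypeUnivEquiv Finset.mem_univ), fun c ↦ hg _ ⟨c, rfl⟩⟩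
  refine ⟨fun a ↦ (g.symm a).1, fun c ↦ by rw [← hg, g.symm_apply_apply], fun c ↦ ?_⟩
  change (g.symm ⁻¹' (Sigma.fst ⁻¹' {c})).ncard = w c
  rw [ncard_preimage_of_injective_subset_range g.symm.injective (by simp),
    ← range_sigmaMk, ← image_univ, ncard_image_of_injective _ sigma_mk_injective]
  simp

theorem comb_lemma_equipartition_general [Fintype α] [Fintype κ] (hrep : Injective rep)
    (hw : ∀ c, Nat.card (Setoid κ) + 1 < w c) (hsum : ∑ c, w c = Fintype.card α)
    (e : Setoid α → Setoid α) :
    ∃ f, IsLabeling rep w f ∧ ∀ t, Setoid.ker f ≤ t → t ≤ e t ∨ ¬ Setoid.ker f ≤ e t := by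
  have := finite_setoid (α := κ)
  obtain ⟨f, hf, hgood⟩ := exists_mem_forall_notMem_of_ncard_mul_le
    (exists_isLabeling hrep (fun c ↦ Nat.zero_lt_of_lt (hw c)) hsum) (Nat.lt_succ_self _)
    (ncard_isBad_mul_le hw e)
  refine ⟨f, hf, fun t ht ↦ ?_⟩
  have hbad : ¬ IsBad e (t.map f) f := fun h ↦ hgood _ ⟨hf, h⟩
  rw [IsBad, Setoid.comap_map_of_ker_le f t ht] at hbad
  tauto

end Labeling

lemma qLe_iff_le {n : ℕ} {s t : Setoid (Fin n)} : QLe s t ↔ t ≤ s :=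
  ⟨fun h i j ↦ h i j, fun h _ _ ↦ @h _ _⟩

lemma IsLabeling.qk_ker {k N : ℕ} {rep : Fin k → Fin (k * N)} {f : Fin (k * N) → Fin k}
    (hf : IsLabeling rep (fun _ ↦ N) f) : Qk k N (Setoid.ker f) := by
  refine ⟨?_, fun i ↦ ?_⟩
  · rw [Nat.card_congr (Setoid.quotientKerEquivOfRightInverse f rep hf.leftInverse), Nat.card_fin]
  · simp only [Setoid.ker_def, eq_comm (a := f i)]
    exact hf.ncard_fiber (f i)

lemma qm_ker_of_leftInverse_castLE {m k n : ℕ} (hmk : m ≤ k) (hkn : k ≤ n) {f : Fin n → Fin k}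
    (hf : LeftInverse f (Fin.castLE hkn)) : Qm m (Setoid.ker f) := by
  intro i j hij hjm h
  have hi : f i = ⟨i, by omega⟩ := hf ⟨i, by omega⟩
  have hj : f j = ⟨j, by omega⟩ := hf ⟨j, by omega⟩
  exact hij.ne (Fin.mk.inj (hi.symm.trans (h.trans hj)))

/-- Lemma 5.2 (combinatorial lemma, equipartition form): for `m ≤ k`, `k ≥ 1`, there is `N'`
such that for all `N ≥ N'` and every `e : Q(kN) → Q(kN)` there is `s ∈ Q_k^m(kN)` with:
for all `t ≤ s`, either `e(t) ≤ t` or `e(t) ≰ s`. -/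
theorem comb_lemma_equipartition (m k : ℕ) (hk : 1 ≤ k) (hmk : m ≤ k) :
    ∃ N' : ℕ, ∀ N ≥ N',
      ∀ e : Setoid (Fin (k * N)) → Setoid (Fin (k * N)),
        ∃ s : Setoid (Fin (k * N)), Qk k N s ∧ Qm m s ∧
          ∀ t : Setoid (Fin (k * N)), QLe t s → (QLe (e t) t ∨ ¬ QLe (e t) s) := by
  refine ⟨Nat.card (Setoid (Fin k)) + 2, fun N hN e ↦ ?_⟩
  have hkN : k ≤ k * N := Nat.le_mul_of_pos_right k (by omega)
  obtain ⟨f, hf, hgood⟩ := comb_lemma_equipartition_general (Fin.castLE_injective hkN)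
    (w := fun _ ↦ N) (fun _ ↦ hN) (by simp) e
  exact ⟨Setoid.ker f, hf.qk_ker, qm_ker_of_leftInverse_castLE hmk hkN hf.leftInverse,
    fun t ht ↦ by simpa only [qLe_iff_le] using hgood t (qLe_iff_le.1 ht)⟩
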